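/- arXiv:2103.11917 — 5 statements merged into one kernel-verified Lean document; each statement's English description precedes it below -/
import Mathlib

section
/- Every greedy coloring of a digraph D (with respect to any ordering of its vertices) is an acyclic complete coloring of D. -/
/-!
A vertex `w` is refused by a color `i` smaller than its own because adding `w` to the current
`i`-class closes a directed cycle. That class is itself acyclic, so the cycle runs through `w`,
and as `D` has no loops it enters `w` from the class and leaves `w` into the class
(`AcyclicSet.exists_adj_of_not_insert`). This gives arcs in both directions between the color
classes of any two distinct used colors. Acyclicity of the classes follows by adding the vertices
one at a time: each is placed in a class that stays acyclic (`greedyColorAt_spec`).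
-/

/-
Common definitions.

A digraph `D : Digraph V` on a finite vertex type `V` is loopless when
`∀ v, ¬ D.Adj v v` (this appears as a hypothesis in the theorems below).
-/

namespace Paper

open Function

variable {V : Type*}

/-- A set `S` of vertices of `D` is acyclic if the arc relation restricted to `S`
admits no vertex with a nonempty directed walk from itself back to itself
(i.e. the subdigraph induced on `S` has no directed cycle). -/
def AcyclicSet (D : Digraph V) (S : Set V) : Prop :=
  ∀ v : V, ¬ Relation.TransGen (fun a b => a ∈ S ∧ b ∈ S ∧ D.Adj a b) v v

/-- An acyclic coloring: every color class is acyclic. -/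
def IsAcyclicColoring (D : Digraph V) {k : ℕ} (c : V → Fin k) : Prop :=
  ∀ i : Fin k, AcyclicSet D {v | c v = i}

/-- A complete coloring: for every ordered pair of distinct colors there is an arc
from a vertex of the first color to a vertex of the second color. -/
def IsCompleteColoring (D : Digraph V) {k : ℕ} (c : V → Fin k) : Prop :=
  ∀ i j : Fin k, i ≠ j → ∃ u v : V, D.Adj u v ∧ c u = i ∧ c v = j

/-- The dichromatic number `dc(D)`: the least number of colors in an acyclic coloring. -/
noncomputable def dichromatic (D : Digraph V) [Fintype V] : ℕ :=
  sInf {k : ℕ | ∃ c : V → Fin k, IsAcyclicColoring D c}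

/-- The diachromatic number `dac(D)`: the largest number of colors in an acyclic
complete coloring (a coloring "with `k` colors" uses all `k` colors, i.e. is surjective). -/
noncomputable def diachromatic (D : Digraph V) [Fintype V] : ℕ :=
  sSup {k : ℕ | ∃ c : V → Fin k,
    Surjective c ∧ IsAcyclicColoring D c ∧ IsCompleteColoring D c}

/-- The color (a positive integer; `1` is the first color) that the greedy algorithm,
run along the vertex ordering `e` (position `0` first), assigns to the vertex in
position `i`: namely the smallest positive color whose current class stays acyclic
after adding this vertex (a fresh color has an empty class, so for a loopless digraph
this in particular uses a new color exactly when the vertex forms a directed cycle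
with every currently used class). -/
noncomputable def greedyColorAt (D : Digraph V) [Fintype V]
    (e : Fin (Fintype.card V) ≃ V) (i : Fin (Fintype.card V)) : ℕ :=
  sInf {c : ℕ | 1 ≤ c ∧
    AcyclicSet D (insert (e i)
      {v : V | ∃ j : Fin (Fintype.card V), ∃ _ : j < i, e j = v ∧ greedyColorAt D e j = c})}
termination_by i.val
decreasing_by exact ‹_›

/-- The greedy coloring of `D` with respect to the vertex ordering `e`. -/
noncomputable def greedyColoring (D : Digraph V) [Fintype V]
    (e : Fin (Fintype.card V) ≃ V) : V → ℕ :=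
  fun v => greedyColorAt D e (e.symm v)

/-- The number of colors used by the greedy coloring with respect to `e`. -/
noncomputable def greedyCount (D : Digraph V) [Fintype V]
    (e : Fin (Fintype.card V) ≃ V) : ℕ :=
  (Finset.univ.image (greedyColoring D e)).card

/-- The digrundy number `dG(D)`: the largest number of colors used by a greedy
coloring, over all orderings of the vertices. -/
noncomputable def digrundy (D : Digraph V) [Fintype V] : ℕ :=
  sSup {k : ℕ | ∃ e : Fin (Fintype.card V) ≃ V, greedyCount D e = k}

/-- The complement of a digraph: arcs are exactly the ordered pairs of distinct
vertices that are not arcs of `D`. -/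
def digraphCompl (D : Digraph V) : Digraph V :=
  ⟨fun u v => u ≠ v ∧ ¬ D.Adj u v⟩

/-- The maximum out-degree `Δ⁺(D)`. -/
noncomputable def maxOutDegree (D : Digraph V) [Fintype V] : ℕ :=
  ⨆ v : V, {u : V | D.Adj v u}.ncard

/-- The maximum in-degree `Δ⁻(D)`. -/
noncomputable def maxInDegree (D : Digraph V) [Fintype V] : ℕ :=
  ⨆ v : V, {u : V | D.Adj u v}.ncard

/-- The clique number `ω(D)`: the maximum size of a set of vertices every two of
which are joined by arcs in both directions. -/
noncomputable def cliqueNumber (D : Digraph V) [Fintype V] : ℕ :=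
  sSup {k : ℕ | ∃ S : Finset V, S.card = k ∧ ∀ u ∈ S, ∀ v ∈ S, u ≠ v → D.Adj u v}

/-- The subdigraph of `D` induced on a set `S` of vertices. -/
def induceD (D : Digraph V) (S : Set V) : Digraph S :=
  ⟨fun u v => D.Adj u v⟩

/-- A parsimonious coloring along the vertex ordering `e`: an acyclic coloring, built
along `e`, in which each vertex must receive an already-used color whenever some
existing color class remains acyclic upon adding the vertex, and receives the smallest
unused positive integer only if adding it to every existing class creates a directed
cycle. -/
def IsParsimonious (D : Digraph V) [Fintype V]
    (e : Fin (Fintype.card V) ≃ V) (c : V → ℕ) : Prop :=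
  (∀ i : ℕ, AcyclicSet D {v | c v = i}) ∧
  ∀ i : Fin (Fintype.card V),
    ((∃ d : ℕ, (∃ j, j < i ∧ c (e j) = d) ∧
        AcyclicSet D (insert (e i) {v : V | ∃ j, j < i ∧ e j = v ∧ c v = d})) →
      ∃ j, j < i ∧ c (e j) = c (e i)) ∧
    ((¬ ∃ d : ℕ, (∃ j, j < i ∧ c (e j) = d) ∧
        AcyclicSet D (insert (e i) {v : V | ∃ j, j < i ∧ e j = v ∧ c v = d})) →
      c (e i) = sInf {m : ℕ | 1 ≤ m ∧ ∀ j, j < i → c (e j) ≠ m})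

/-- The parsimonious `e`-coloring number `dc_e(D)`: the minimum number of colors in a
parsimonious coloring along `e`. -/
noncomputable def parsimoniousNumber (D : Digraph V) [Fintype V]
    (e : Fin (Fintype.card V) ≃ V) : ℕ :=
  sInf {k : ℕ | ∃ c : V → ℕ, IsParsimonious D e c ∧ (Finset.univ.image c).card = k}

/-- The diochromatic number `dc^o(D)`: the maximum of the parsimonious coloring
numbers over all orderings of the vertices. -/
noncomputable def diochromatic (D : Digraph V) [Fintype V] : ℕ :=
  sSup {k : ℕ | ∃ e : Fin (Fintype.card V) ≃ V, parsimoniousNumber D e = k}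

end Paper

namespace Paper

theorem AcyclicSet.mono {V : Type*} {D : Digraph V} {S T : Set V} (hT : AcyclicSet D T)
    (h : S ⊆ T) : AcyclicSet D S := fun v hv =>
  hT v (Relation.TransGen.mono (fun _ _ hab => ⟨h hab.1, h hab.2.1, hab.2.2⟩) _ _ hv)

/-- A cycle created by adding a loopless vertex `w` to an acyclic set enters `w` from the set
and leaves `w` into the set. -/
theorem AcyclicSet.exists_adj_of_not_insert {V : Type*} {D : Digraph V} {S : Set V} {w : V}
    (hw : ¬ D.Adj w w) (hS : AcyclicSet D S) (h : ¬ AcyclicSet D (insert w S)) :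
    (∃ x ∈ S, D.Adj x w) ∧ (∃ y ∈ S, D.Adj w y) := by
  constructor
  · by_contra! hx
    -- Without an arc from `S` to `w`, the head of every arc in `insert w S` lies in `S`.
    have key : ∀ a b, (a ∈ insert w S ∧ b ∈ insert w S ∧ D.Adj a b) → b ∈ S := by
      rintro a b ⟨rfl | ha, rfl | hb, hab⟩
      · exact absurd hab hw
      · exact hb
      · exact absurd hab (hx a ha)
      · exact hb
    refine h fun v hv => hS v ?_
    have hvS : v ∈ S := by
      obtain ⟨c, -, hc⟩ := Relation.TransGen.tail'_iff.1 hv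
      exact key _ _ hc
    have main : ∀ b, Relation.TransGen
        (fun a b => a ∈ insert w S ∧ b ∈ insert w S ∧ D.Adj a b) v b →
        Relation.TransGen (fun a b => a ∈ S ∧ b ∈ S ∧ D.Adj a b) v b ∧ b ∈ S := by
      intro b hb
      induction hb with
      | single h => exact ⟨.single ⟨hvS, key _ _ h, h.2.2⟩, key _ _ h⟩
      | tail _ h ih => exact ⟨ih.1.tail ⟨ih.2, key _ _ h, h.2.2⟩, key _ _ h⟩
    exact (main v hv).1
  · by_contra! hy
    -- Without an arc from `w` to `S`, the tail of every arc in `insert w S` lies in `S`.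
    have key : ∀ a b, (a ∈ insert w S ∧ b ∈ insert w S ∧ D.Adj a b) → a ∈ S := by
      rintro a b ⟨rfl | ha, rfl | hb, hab⟩
      · exact absurd hab hw
      · exact absurd hab (hy b hb)
      · exact ha
      · exact ha
    refine h fun v hv => hS v ?_
    have hvS : v ∈ S := by
      obtain ⟨c, hc, -⟩ := Relation.TransGen.head'_iff.1 hv
      exact key _ _ hc
    have main : ∀ a, Relation.TransGen
        (fun a b => a ∈ insert w S ∧ b ∈ insert w S ∧ D.Adj a b) a v →
        Relation.TransGen (fun a b => a ∈ S ∧ b ∈ S ∧ D.Adj a b) a v ∧ a ∈ S := by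
      intro a ha
      induction ha using Relation.TransGen.head_induction_on with
      | single h => exact ⟨.single ⟨key _ _ h, hvS, h.2.2⟩, key _ _ h⟩
      | head h _ ih => exact ⟨ih.1.head ⟨key _ _ h, ih.2, h.2.2⟩, key _ _ h⟩
    exact (main v hv).1

theorem acyclicSet_empty {V : Type*} (D : Digraph V) : AcyclicSet D (∅ : Set V) := by
  intro v hv
  obtain ⟨c, hc, -⟩ := Relation.TransGen.head'_iff.1 hv
  exact hc.1

/-- The vertices of color `c` among those preceding position `n` in the ordering `e`. -/
def colorClassBefore {V : Type*} [Fintype V] (D : Digraph V)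
    (e : Fin (Fintype.card V) ≃ V) (n c : ℕ) : Set V :=
  {v | (e.symm v).val < n ∧ greedyColoring D e v = c}

theorem greedyColorAt_eq {V : Type*} [Fintype V] (D : Digraph V)
    (e : Fin (Fintype.card V) ≃ V) (i : Fin (Fintype.card V)) :
    greedyColorAt D e i =
      sInf {c : ℕ | 1 ≤ c ∧ AcyclicSet D (insert (e i) (colorClassBefore D e i c))} := by
  rw [greedyColorAt]
  congr 1
  ext c
  have : {v : V | ∃ j : Fin (Fintype.card V), ∃ _ : j < i, e j = v ∧ greedyColorAt D e j = c}
      = colorClassBefore D e i c := by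
    ext v
    constructor
    · rintro ⟨j, hj, rfl, hc⟩
      exact ⟨by simpa using hj, by simpa [greedyColoring] using hc⟩
    · rintro ⟨hj, hc⟩
      exact ⟨e.symm v, hj, by simp, hc⟩
  simp only [Set.mem_ofPred_eq, this]

/-- The set of admissible colors is nonempty, since an unused color is always admissible in a
loopless digraph; hence its infimum, the greedy color, is itself admissible. -/
theorem greedyColorAt_spec {V : Type*} [Fintype V] (D : Digraph V) (hD : ∀ v : V, ¬ D.Adj v v)
    (e : Fin (Fintype.card V) ≃ V) (i : Fin (Fintype.card V)) :
    1 ≤ greedyColorAt D e i ∧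
      AcyclicSet D (insert (e i) (colorClassBefore D e i (greedyColorAt D e i))) := by
  have hne : {c : ℕ | 1 ≤ c ∧
      AcyclicSet D (insert (e i) (colorClassBefore D e i c))}.Nonempty := by
    obtain ⟨M, hM⟩ := (Set.finite_range (greedyColoring D e)).bddAbove
    refine ⟨M + 1, by omega, ?_⟩
    have hempty : colorClassBefore D e i (M + 1) = ∅ := by
      ext v
      have := hM ⟨v, rfl⟩
      simp only [colorClassBefore, Set.mem_ofPred_eq, Set.mem_empty_iff_false, iff_false]
      omega
    rw [hempty]
    by_contra h
    obtain ⟨⟨x, hx, -⟩, -⟩ :=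
      (acyclicSet_empty D).exists_adj_of_not_insert (hD _) h
    exact hx
  have := Nat.sInf_mem hne
  rwa [← greedyColorAt_eq] at this

theorem acyclicSet_colorClassBefore {V : Type*} [Fintype V] (D : Digraph V)
    (hD : ∀ v : V, ¬ D.Adj v v) (e : Fin (Fintype.card V) ≃ V) (c n : ℕ) :
    AcyclicSet D (colorClassBefore D e n c) := by
  induction n with
  | zero => exact (acyclicSet_empty D).mono fun v hv => absurd hv.1 (Nat.not_lt_zero _)
  | succ n ih =>
    by_cases h : ∃ v, (e.symm v).val = n ∧ greedyColoring D e v = c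
    · obtain ⟨v, rfl, rfl⟩ := h
      refine (greedyColorAt_spec D hD e (e.symm v)).2.mono ?_
      rintro u ⟨hu, huc⟩
      rcases Nat.lt_succ_iff_lt_or_eq.1 hu with hu | hu
      · exact Or.inr ⟨hu, huc⟩
      · left
        rw [e.apply_symm_apply]
        exact e.symm.injective (Fin.ext hu)
    · refine ih.mono ?_
      rintro u ⟨hu, huc⟩
      rcases Nat.lt_succ_iff_lt_or_eq.1 hu with hu | hu
      · exact ⟨hu, huc⟩
      · exact absurd ⟨u, hu, huc⟩ h

/-- A vertex sends an arc to, and receives an arc from, the class of every positive color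
smaller than its own. -/
theorem exists_adj_of_lt_greedyColoring {V : Type*} [Fintype V] (D : Digraph V)
    (hD : ∀ v : V, ¬ D.Adj v v) (e : Fin (Fintype.card V) ≃ V) {i : ℕ} {w : V}
    (hi : 1 ≤ i) (h : i < greedyColoring D e w) :
    (∃ x, greedyColoring D e x = i ∧ D.Adj x w) ∧
      (∃ y, greedyColoring D e y = i ∧ D.Adj w y) := by
  have hnot : ¬ AcyclicSet D (insert w (colorClassBefore D e (e.symm w) i)) := by
    intro hac
    rw [greedyColoring, greedyColorAt_eq, e.apply_symm_apply] at h
    exact Nat.notMem_of_lt_sInf h ⟨hi, hac⟩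
  obtain ⟨⟨x, hx, hxw⟩, ⟨y, hy, hwy⟩⟩ :=
    (acyclicSet_colorClassBefore D hD e i _).exists_adj_of_not_insert (hD w) hnot
  exact ⟨⟨x, hx.2, hxw⟩, ⟨y, hy.2, hwy⟩⟩

/-- Every greedy coloring of a digraph `D` (with respect to any ordering
of its vertices) is an acyclic complete coloring of `D`. -/
theorem greedyColoring_acyclic_complete {V : Type*} [Fintype V]
    (D : Digraph V) (hD : ∀ v : V, ¬ D.Adj v v)
    (e : Fin (Fintype.card V) ≃ V) :
    (∀ i : ℕ, AcyclicSet D {v | greedyColoring D e v = i}) ∧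
    (∀ i j : ℕ, i ≠ j →
      (∃ u : V, greedyColoring D e u = i) → (∃ w : V, greedyColoring D e w = j) →
      ∃ u w : V, D.Adj u w ∧ greedyColoring D e u = i ∧ greedyColoring D e w = j) := by
  constructor
  · intro i
    exact (acyclicSet_colorClassBefore D hD e i (Fintype.card V)).mono
      fun v hv => ⟨(e.symm v).isLt, hv⟩
  · rintro i j hij ⟨u, rfl⟩ ⟨w, rfl⟩
    rcases Nat.lt_or_gt_of_ne hij with h | h
    · obtain ⟨⟨x, hx, hxw⟩, -⟩ :=
        exists_adj_of_lt_greedyColoring D hD e (greedyColorAt_spec D hD e _).1 h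
      exact ⟨x, w, hxw, hx, rfl⟩
    · obtain ⟨-, y, hy, huy⟩ :=
        exists_adj_of_lt_greedyColoring D hD e (greedyColorAt_spec D hD e _).1 h
      exact ⟨u, y, huy, rfl, hy⟩

end Paper
end

section
/- If D is a digraph of order n, then dac(D) + dac(D^c) ≤ ⌈4n/3⌉, where D^c denotes the complement of D. -/
namespace Paper

open Function in
/-- For complete colorings of two arc-disjoint digraphs `D` and `E`: the singleton classes of `c`
form a clique of `D`; many of them bound `l`, few of them bound `k`. -/
theorem two_mul_add_le_of_complete {V : Type*} [Fintype V] {D E : Digraph V}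
    (hDE : ∀ u v, E.Adj u v → ¬ D.Adj u v) {k l : ℕ} {c : V → Fin k} {c' : V → Fin l}
    (hs : Surjective c) (hc : IsCompleteColoring D c) (hc' : IsCompleteColoring E c') :
    2 * k + l ≤ 2 * Fintype.card V + 1 := by
  classical
  set S : Finset V := Finset.univ.filter (fun v => ∀ w, c w = c v → w = v) with hS
  have memS : ∀ v, v ∈ S ↔ ∀ w, c w = c v → w = v := fun v => by simp [hS]
  have hcard : S.card + Sᶜ.card = Fintype.card V := Finset.card_add_card_compl S
  have h1 : k ≤ S.card + (Sᶜ.image c).card := by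
    have hu : (Finset.univ : Finset (Fin k)) ⊆ S.image c ∪ Sᶜ.image c := by
      rw [← Finset.image_union, Finset.union_compl, Finset.image_univ_of_surjective hs]
    have h := (Finset.card_le_card hu).trans (Finset.card_union_le _ _)
    have h' : (S.image c).card ≤ S.card := Finset.card_image_le
    rw [Finset.card_univ, Fintype.card_fin] at h
    omega
  -- A class meeting `Sᶜ` lies inside `Sᶜ` and has at least two elements.
  have h2 : 2 * (Sᶜ.image c).card ≤ Sᶜ.card := by
    rw [mul_comm]
    refine Finset.card_nsmul_le_sum (Sᶜ.image c) (fun i => {v ∈ Sᶜ | c v = i}.card) 2 ?_ |>.trans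
      (Finset.card_eq_sum_card_image c Sᶜ).ge
    intro i hi
    obtain ⟨v, hv, rfl⟩ := Finset.mem_image.1 hi
    have hv' := hv
    rw [Finset.mem_compl, memS] at hv'
    push Not at hv'
    obtain ⟨w, hw, hwv⟩ := hv'
    refine Finset.one_lt_card.2 ⟨v, Finset.mem_filter.2 ⟨hv, rfl⟩, w, ?_, hwv.symm⟩
    simp only [Finset.mem_filter, Finset.mem_compl, memS]
    exact ⟨fun h => hwv (h v hw.symm).symm, hw⟩
  -- Two colors of `c'` missing from `Sᶜ` would have classes inside the clique `S` of `D`, where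
  -- `E` has no arcs.
  have h3 : ((Sᶜ.image c')ᶜ).card ≤ 1 := by
    refine Finset.card_le_one.2 fun i hi j hj => ?_
    by_contra hij
    have inS : ∀ u, c' u ∈ (Sᶜ.image c')ᶜ → u ∈ S := by
      intro u hu
      by_contra hn
      exact Finset.mem_compl.1 hu (Finset.mem_image_of_mem _ (Finset.mem_compl.2 hn))
    obtain ⟨u, v, huv, rfl, rfl⟩ := hc' i j hij
    have hu := (memS u).1 (inS u hi)
    have hv := (memS v).1 (inS v hj)
    have hne : c u ≠ c v := fun h => hij (by rw [hv u h])
    obtain ⟨a, b, hab, ha, hb⟩ := hc _ _ hne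
    rw [hu a ha, hv b hb] at hab
    exact hDE u v huv hab
  have h4 := Finset.card_add_card_compl (Sᶜ.image c')
  have h5 : (Sᶜ.image c').card ≤ Sᶜ.card := Finset.card_image_le
  rw [Fintype.card_fin] at h4
  omega

open Function in
/-- The supremum defining `diachromatic` is attained, unless it is the junk value `0` of the
supremum of an empty set. -/
theorem diachromatic_spec {V : Type*} [Fintype V] (D : Digraph V) :
    diachromatic D ≤ Fintype.card V ∧ (diachromatic D = 0 ∨
      ∃ c : V → Fin (diachromatic D), Surjective c ∧ IsCompleteColoring D c) := by
  set A : Set ℕ := {k : ℕ | ∃ c : V → Fin k,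
    Surjective c ∧ IsAcyclicColoring D c ∧ IsCompleteColoring D c} with hA
  have hdef : diachromatic D = sSup A := rfl
  have hle : ∀ k ∈ A, k ≤ Fintype.card V := by
    rintro k ⟨c, hs, -⟩
    simpa using Fintype.card_le_of_surjective c hs
  rcases A.eq_empty_or_nonempty with h | h
  · have h0 : diachromatic D = 0 := by rw [hdef, h]; simp
    exact ⟨by omega, Or.inl h0⟩
  · have hm : diachromatic D ∈ A := Nat.sSup_mem h ⟨_, hle⟩
    obtain ⟨c, hs, -, hc⟩ := id hm
    exact ⟨hle _ hm, Or.inr ⟨c, hs, hc⟩⟩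

/-- If `D` is a digraph of order `n`, then
`dac(D) + dac(Dᶜ) ≤ ⌈4n/3⌉`.  (In natural-number arithmetic,
`⌈4n/3⌉ = (4n + 2) / 3`.) -/
theorem diachromatic_nordhaus_gaddum_ceil {V : Type*} [Fintype V]
    (D : Digraph V) (hD : ∀ v : V, ¬ D.Adj v v) :
    diachromatic D + diachromatic (digraphCompl D) ≤ (4 * Fintype.card V + 2) / 3 := by
  obtain ⟨hk, h0 | ⟨c, hs, hc⟩⟩ := diachromatic_spec D
  · have := (diachromatic_spec (digraphCompl D)).1
    omega
  obtain ⟨hl, h0 | ⟨c', hs', hc'⟩⟩ := diachromatic_spec (digraphCompl D)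
  · omega
  have h1 := two_mul_add_le_of_complete (D := D) (E := digraphCompl D)
    (fun u v h => h.2) hs hc hc'
  have h2 := two_mul_add_le_of_complete (D := digraphCompl D) (E := D)
    (fun u v h h' => h'.2 h) hs' hc' hc
  omega

end Paper
end

section
/- If D is a digraph of order n and ω(D) denotes the maximum order of a complete subdigraph of D, then 2·dac(D) ≤ n + ω(D), i.e., dac(D) ≤ ω(D) + (n − ω(D))/2. -/
namespace Paper

/-- The vertices whose color class is a singleton. -/
noncomputable def loners {V : Type*} [Fintype V] {k : ℕ} (c : V → Fin k) : Finset V :=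
  open Classical in Finset.univ.filter fun v => ∀ u, c u = c v → u = v

theorem adj_of_mem_loners {V : Type*} [Fintype V] {D : Digraph V} {k : ℕ} {c : V → Fin k}
    (hc : IsCompleteColoring D c) :
    ∀ u ∈ loners c, ∀ v ∈ loners c, u ≠ v → D.Adj u v := by
  intro u hu v hv huv
  simp only [loners, Finset.mem_filter, Finset.mem_univ, true_and] at hu hv
  obtain ⟨a, b, hab, ha, hb⟩ := hc (c u) (c v) fun h => huv (hv u h)
  rwa [hu a ha, hv b hb] at hab

/-- Each class, counted once by its vertices and once by its loners, contributes at least `2`. -/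
theorem two_mul_le_card_add_loners {V : Type*} [Fintype V] {k : ℕ} {c : V → Fin k}
    (hc : Function.Surjective c) : 2 * k ≤ Fintype.card V + (loners c).card := by
  classical
  have h1 : Fintype.card V = ∑ i : Fin k, (Finset.univ.filter fun v => c v = i).card :=
    Finset.card_eq_sum_card_fiberwise (fun _ _ => Finset.mem_coe.2 (Finset.mem_univ _))
  have h2 : (loners c).card = ∑ i : Fin k, ((loners c).filter fun v => c v = i).card :=
    Finset.card_eq_sum_card_fiberwise (fun _ _ => Finset.mem_coe.2 (Finset.mem_univ _))
  have h3 : ∑ _i : Fin k, 2 = 2 * k := by simp [mul_comm]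
  rw [h1, h2, ← Finset.sum_add_distrib, ← h3]
  refine Finset.sum_le_sum fun i _ => ?_
  obtain ⟨v, rfl⟩ := hc i
  have hv : 0 < (Finset.univ.filter fun u => c u = c v).card :=
    Finset.card_pos.2 ⟨v, by simp⟩
  by_cases h : v ∈ loners c
  · have : 0 < ((loners c).filter fun u => c u = c v).card :=
      Finset.card_pos.2 ⟨v, by simp [h]⟩
    omega
  · simp only [loners, Finset.mem_filter, Finset.mem_univ, true_and, not_forall] at h
    obtain ⟨u, hu, huv⟩ := h
    have : 1 < (Finset.univ.filter fun u => c u = c v).card :=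
      Finset.one_lt_card.2 ⟨u, by simp [hu], v, by simp, huv⟩
    omega

theorem card_le_cliqueNumber {V : Type*} [Fintype V] {D : Digraph V} (S : Finset V)
    (hS : ∀ u ∈ S, ∀ v ∈ S, u ≠ v → D.Adj u v) : S.card ≤ cliqueNumber D := by
  refine le_csSup ⟨Fintype.card V, ?_⟩ ⟨S, rfl, hS⟩
  rintro _ ⟨T, rfl, -⟩
  exact T.card_le_univ

/-- If `D` is a digraph of order `n` and `ω(D)` denotes the maximum
order of a complete subdigraph of `D`, then `2·dac(D) ≤ n + ω(D)`. -/
theorem two_mul_diachromatic_le {V : Type*} [Fintype V]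
    (D : Digraph V) (hD : ∀ v : V, ¬ D.Adj v v) :
    2 * diachromatic D ≤ Fintype.card V + cliqueNumber D := by
  suffices h : diachromatic D ≤ (Fintype.card V + cliqueNumber D) / 2 by omega
  refine csSup_le' ?_
  rintro k ⟨c, hs, -, hc⟩
  have h1 := two_mul_le_card_add_loners hs
  have h2 := card_le_cliqueNumber _ (adj_of_mem_loners hc)
  omega

end Paper
end

section
/- If D is a digraph of order n and ω(D) denotes the maximum order of a complete subdigraph of D, then dac(D^c) ≤ n − ω(D) + 1, where D^c denotes the complement of D. -/
namespace Paper

/-- The clique number is attained: the sizes of complete subdigraphs are bounded by the order. -/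
lemma exists_card_eq_cliqueNumber {V : Type*} [Fintype V] (D : Digraph V) :
    ∃ S : Finset V, S.card = cliqueNumber D ∧ ∀ u ∈ S, ∀ v ∈ S, u ≠ v → D.Adj u v := by
  refine Nat.sSup_mem
    (s := {k : ℕ | ∃ S : Finset V, S.card = k ∧ ∀ u ∈ S, ∀ v ∈ S, u ≠ v → D.Adj u v})
    ⟨0, ∅, by simp⟩ ⟨Fintype.card V, ?_⟩
  rintro k ⟨S, rfl, -⟩
  exact S.card_le_univ

/-- If `D` is a digraph of order `n` and `ω(D)` denotes the maximum
order of a complete subdigraph of `D`, then `dac(Dᶜ) ≤ n − ω(D) + 1`. -/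
theorem diachromatic_compl_le {V : Type*} [Fintype V]
    (D : Digraph V) (hD : ∀ v : V, ¬ D.Adj v v) :
    diachromatic (digraphCompl D) ≤ Fintype.card V - cliqueNumber D + 1 := by
  classical
  obtain ⟨S, hS, hclique⟩ := exists_card_eq_cliqueNumber D
  refine csSup_le' ?_
  rintro k ⟨c, -, -, hc⟩
  have h_out : (Sᶜ.image c).card ≤ Fintype.card V - cliqueNumber D := by
    rw [← hS, ← Finset.card_compl]
    exact Finset.card_image_le
  have h_in : (Sᶜ.image c)ᶜ.card ≤ 1 := by
    rw [Finset.card_le_one]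
    intro i hi j hj
    by_contra hij
    have mem_S : ∀ v, c v ∈ (Sᶜ.image c)ᶜ → v ∈ S := by
      intro v hv
      by_contra hvS
      exact Finset.mem_compl.1 hv (Finset.mem_image_of_mem c (Finset.mem_compl.2 hvS))
    obtain ⟨u, v, ⟨huv, hadj⟩, rfl, rfl⟩ := hc i j hij
    exact hadj (hclique u (mem_S u hi) v (mem_S v hj) huv)
  have h_total := Finset.card_add_card_compl (Sᶜ.image c)
  rw [Fintype.card_fin] at h_total
  omega

end Paper
end

section
/- If D is a digraph of order n ≥ 10, then dG(D) + dG(D^c) ≤ ⌊(5n+2)/4⌋, where D^c denotes the complement of D. -/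
namespace Paper

/-! ### Greedy colorings -/

section Greedy

variable {V : Type*}

/-- A vertex closing a directed cycle with an acyclic set has an out-neighbor and an in-neighbor
in that set. -/
theorem exists_arcs_of_not_acyclic (D : Digraph V) (hD : ∀ v, ¬ D.Adj v v) (v : V) (T : Set V)
    (hT : AcyclicSet D T) (h : ¬ AcyclicSet D (insert v T)) :
    (∃ u ∈ T, D.Adj v u) ∧ (∃ u ∈ T, D.Adj u v) := by
  constructor
  · by_contra! hc
    apply h
    intro a ha
    have src : ∀ x y, (x ∈ insert v T ∧ y ∈ insert v T ∧ D.Adj x y) → x ∈ T := by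
      rintro x y ⟨hx, hy, hxy⟩
      rcases hx with rfl | hx
      · rcases hy with rfl | hy
        · exact absurd hxy (hD _)
        · exact absurd hxy (hc _ hy)
      · exact hx
    have key : ∀ b, Relation.TransGen
        (fun x y => x ∈ insert v T ∧ y ∈ insert v T ∧ D.Adj x y) a b → b ∈ T →
        Relation.TransGen (fun x y => x ∈ T ∧ y ∈ T ∧ D.Adj x y) a b := by
      intro b hb
      induction hb with
      | single h1 => exact fun hbT => .single ⟨src _ _ h1, hbT, h1.2.2⟩
      | tail _ h2 ih => exact fun hbT => .tail (ih (src _ _ h2)) ⟨src _ _ h2, hbT, h2.2.2⟩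
    obtain ⟨y, hy, _⟩ := Relation.TransGen.head'_iff.1 ha
    exact hT a (key a ha (src _ _ hy))
  · by_contra! hc
    apply h
    intro a ha
    have tgt : ∀ x y, (x ∈ insert v T ∧ y ∈ insert v T ∧ D.Adj x y) → y ∈ T := by
      rintro x y ⟨hx, hy, hxy⟩
      rcases hy with rfl | hy
      · rcases hx with rfl | hx
        · exact absurd hxy (hD _)
        · exact absurd hxy (hc _ hx)
      · exact hy
    have key : ∀ b, Relation.TransGen
        (fun x y => x ∈ insert v T ∧ y ∈ insert v T ∧ D.Adj x y) b a → b ∈ T →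
        Relation.TransGen (fun x y => x ∈ T ∧ y ∈ T ∧ D.Adj x y) b a := by
      intro b hb
      induction hb using Relation.TransGen.head_induction_on with
      | single h1 => exact fun hbT => .single ⟨hbT, tgt _ _ h1, h1.2.2⟩
      | head h1 _ ih => exact fun hbT => .head ⟨hbT, tgt _ _ h1, h1.2.2⟩ (ih (tgt _ _ h1))
    obtain ⟨y, _, hy⟩ := Relation.TransGen.tail'_iff.1 ha
    exact hT a (key a ha (tgt _ _ hy))

variable [Fintype V] (D : Digraph V)

/-- The set whose infimum defines the greedy color is nonempty, since a large color is unused. -/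
theorem greedyColorAt_mem (hD : ∀ v, ¬ D.Adj v v) (e : Fin (Fintype.card V) ≃ V)
    (i : Fin (Fintype.card V)) :
    1 ≤ greedyColorAt D e i ∧ AcyclicSet D (insert (e i)
      {v : V | ∃ j : Fin (Fintype.card V), ∃ _ : j < i,
        e j = v ∧ greedyColorAt D e j = greedyColorAt D e i}) := by
  have hne : {c : ℕ | 1 ≤ c ∧ AcyclicSet D (insert (e i)
      {v : V | ∃ j : Fin (Fintype.card V), ∃ _ : j < i, e j = v ∧ greedyColorAt D e j = c})
      }.Nonempty := by
    refine ⟨(∑ j, greedyColorAt D e j) + 1, by omega, ?_⟩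
    have hempty : {v : V | ∃ j : Fin (Fintype.card V), ∃ _ : j < i,
        e j = v ∧ greedyColorAt D e j = (∑ j, greedyColorAt D e j) + 1} = ∅ := by
      ext v
      simp only [Set.mem_ofPred_eq, Set.mem_empty_iff_false, iff_false]
      rintro ⟨j, _, _, hj⟩
      have := Finset.single_le_sum (f := greedyColorAt D e) (fun _ _ => Nat.zero_le _)
        (Finset.mem_univ j)
      omega
    rw [hempty]
    intro v hv
    obtain ⟨y, ⟨h1, h2, h3⟩, _⟩ := Relation.TransGen.head'_iff.1 hv
    simp only [insert_empty_eq, Set.mem_singleton_iff] at h1 h2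
    subst h1 h2
    exact hD _ h3
  have := Nat.sInf_mem hne
  rw [← greedyColorAt] at this
  exact this

theorem acyclic_prefix (hD : ∀ v, ¬ D.Adj v v) (e : Fin (Fintype.card V) ≃ V)
    (col m : ℕ) :
    AcyclicSet D {v : V | ∃ j : Fin (Fintype.card V), j.val < m ∧
      e j = v ∧ greedyColorAt D e j = col} := by
  induction m with
  | zero =>
    intro v hv
    obtain ⟨y, ⟨h1, _, _⟩, _⟩ := Relation.TransGen.head'_iff.1 hv
    obtain ⟨j, hj, _⟩ := h1
    omega
  | succ m ih =>
    by_cases hm : ∃ i : Fin (Fintype.card V), i.val = m ∧ greedyColorAt D e i = col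
    · obtain ⟨i, rfl, hi⟩ := hm
      convert (greedyColorAt_mem D hD e i).2 using 1
      ext v
      simp only [Set.mem_ofPred_eq, Set.mem_insert_iff, hi, exists_prop, Fin.lt_def]
      constructor
      · rintro ⟨j, h1, h2, h3⟩
        rcases Nat.lt_succ_iff_lt_or_eq.1 h1 with h | h
        · exact Or.inr ⟨j, h, h2, h3⟩
        · left; rw [← h2, Fin.ext h]
      · rintro (rfl | ⟨j, h1, h2, h3⟩)
        · exact ⟨i, by omega, rfl, hi⟩
        · exact ⟨j, by omega, h2, h3⟩
    · convert ih using 1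
      ext v
      simp only [Set.mem_ofPred_eq]
      constructor
      · rintro ⟨j, h1, h2, h3⟩
        refine ⟨j, ?_, h2, h3⟩
        rcases Nat.lt_succ_iff_lt_or_eq.1 h1 with h | h
        · exact h
        · exact absurd ⟨j, h, h3⟩ hm
      · rintro ⟨j, h1, h2, h3⟩
        exact ⟨j, by omega, h2, h3⟩

/-- If all arcs between `v` and an earlier color class involve only `t`, both arcs between `v` and
`t` are present. -/
theorem greedy_key (hD : ∀ v, ¬ D.Adj v v) (e : Fin (Fintype.card V) ≃ V)
    (v t : V) (hlt : greedyColoring D e t < greedyColoring D e v)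
    (h : ∀ s, greedyColoring D e s = greedyColoring D e t → s ≠ t →
      ¬ D.Adj v s ∧ ¬ D.Adj s v) : D.Adj v t ∧ D.Adj t v := by
  set i := e.symm v with hi
  have hv : e i = v := by simp [hi]
  have hpos : 1 ≤ greedyColoring D e t := (greedyColorAt_mem D hD e (e.symm t)).1
  have hnot : ¬ AcyclicSet D (insert v {u : V | ∃ j : Fin (Fintype.card V), j.val < i.val ∧
      e j = u ∧ greedyColorAt D e j = greedyColoring D e t}) := by
    intro hac
    have hle : greedyColorAt D e i ≤ greedyColoring D e t := by
      rw [greedyColorAt]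
      refine Nat.sInf_le ⟨hpos, ?_⟩
      rw [hv]
      simpa only [exists_prop, Fin.lt_def] using hac
    have : greedyColoring D e v = greedyColorAt D e i := rfl
    omega
  obtain ⟨⟨u, ⟨j, _, hj, hju⟩, hu⟩, ⟨w, ⟨j', _, hj', hjw⟩, hw⟩⟩ :=
    exists_arcs_of_not_acyclic D hD v _ (acyclic_prefix D hD e _ _) hnot
  have hcu : greedyColoring D e u = greedyColoring D e t := by
    rw [← hju, ← hj]; simp [greedyColoring]
  have hcw : greedyColoring D e w = greedyColoring D e t := by
    rw [← hjw, ← hj']; simp [greedyColoring]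
  have h1 : u = t := by
    by_contra hne
    exact (h u hcu hne).1 hu
  have h2 : w = t := by
    by_contra hne
    exact (h w hcw hne).2 hw
  exact ⟨h1 ▸ hu, h2 ▸ hw⟩

theorem exists_greedyCount_eq : ∃ e : Fin (Fintype.card V) ≃ V, greedyCount D e = digrundy D := by
  refine Nat.sSup_mem (s := {k : ℕ | ∃ e : Fin (Fintype.card V) ≃ V, greedyCount D e = k})
    ⟨_, (Fintype.equivFin V).symm, rfl⟩ ⟨Fintype.card V, ?_⟩
  rintro k ⟨e, rfl⟩
  exact Finset.card_image_le.trans (by simp)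

end Greedy

/-! ### Pairs of colorings -/

/-- Two symmetric, mutually exclusive relations `G`, `H` on `V`, with a coloring `c` that is
"greedy" for `G` against `H` and a coloring `d` that is "greedy" for `H` against `G`. -/
structure Config (V : Type*) where
  /-- Joined by both arcs of the digraph. -/
  G : V → V → Prop
  /-- Joined by both arcs of the complement. -/
  H : V → V → Prop
  /-- The coloring of the digraph. -/
  c : V → ℕ
  /-- The coloring of the complement. -/
  d : V → ℕ
  G_symm : ∀ {u v}, G u v → G v u
  H_symm : ∀ {u v}, H u v → H v u
  disj : ∀ {u v}, G u v → H u v → False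
  K : ∀ v t, c t < c v → (∀ s, c s = c t → s ≠ t → H v s) → G v t
  K' : ∀ v t, d t < d v → (∀ s, d s = d t → s ≠ t → G v s) → H v t

namespace Config

open scoped Classical in
/-- If every element of `A` shares its `f`-value with another element of `A`, then `f` takes at
most `|A| / 2` values on `A`. -/
theorem two_mul_card_image_le {V : Type*} (f : V → ℕ) (A : Finset V)
    (h : ∀ a ∈ A, ∃ b ∈ A, f b = f a ∧ b ≠ a) : 2 * (A.image f).card ≤ A.card := by
  refine Finset.mul_card_image_le_card_of_maps_to
    (fun a ha => Finset.mem_image_of_mem f ha) 2 fun n hn => ?_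
  obtain ⟨a, ha, rfl⟩ := Finset.mem_image.1 hn
  obtain ⟨b, hb, hba, hne⟩ := h a ha
  exact Finset.one_lt_card.2 ⟨b, by simp [hb, hba], a, by simp [ha], hne⟩

variable {V : Type*} [Fintype V] (S : Config V)

/-- The configuration with the roles of the digraph and its complement exchanged. -/
def swap {V : Type*} (S : Config V) : Config V :=
  ⟨S.H, S.G, S.d, S.c, S.H_symm, S.G_symm, fun h h' => S.disj h' h, S.K', S.K⟩

open scoped Classical in
/-- Vertices forming a singleton class of `c`; `S.swap.X` plays this role for `d`. -/
noncomputable def X : Finset V := Finset.univ.filter fun v => ∀ u, S.c u = S.c v → u = v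

open scoped Classical in
/-- Vertices in no singleton class of either coloring. -/
noncomputable def R : Finset V := Finset.univ.filter fun v => v ∉ S.X ∧ v ∉ S.swap.X

open scoped Classical in
/-- Vertices of `R` that are the only vertex of `R` in their class of `c`. -/
noncomputable def P : Finset V := S.R.filter fun v => ∀ u ∈ S.R, S.c u = S.c v → u = v

open scoped Classical in
/-- Vertices of `P` whose class of `c` has exactly two elements. -/
noncomputable def P2 : Finset V :=
  S.P.filter fun v => ∃ y, y ≠ v ∧ ∀ u, S.c u = S.c v → u = v ∨ u = y

open scoped Classical in
/-- Vertices in nonsingleton classes of `c` that consist of singletons of `d`. -/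
noncomputable def Y0 : Finset V :=
  S.swap.X.filter fun y => y ∉ S.X ∧ ∀ u, S.c u = S.c y → u ∉ S.R

open scoped Classical in
/-- Singletons of `d` whose class of `c` meets `R \ P`, i.e. has at least two vertices in `R`. -/
noncomputable def Y2 : Finset V :=
  S.swap.X.filter fun y => ∃ r ∈ S.R, r ∉ S.P ∧ S.c r = S.c y

variable {S}

theorem mem_X {v : V} : v ∈ S.X ↔ ∀ u, S.c u = S.c v → u = v := by simp [X]

theorem mem_R {v : V} : v ∈ S.R ↔ v ∉ S.X ∧ v ∉ S.swap.X := by simp [R]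

theorem swap_R : S.swap.R = S.R := by
  ext v
  rw [mem_R, mem_R, and_comm]
  rfl

theorem mem_P {v : V} : v ∈ S.P ↔ v ∈ S.R ∧ ∀ u ∈ S.R, S.c u = S.c v → u = v := by simp [P]

theorem mem_P2 {v : V} :
    v ∈ S.P2 ↔ v ∈ S.P ∧ ∃ y, y ≠ v ∧ ∀ u, S.c u = S.c v → u = v ∨ u = y := by simp [P2]

theorem mem_Y0 {y : V} :
    y ∈ S.Y0 ↔ y ∈ S.swap.X ∧ y ∉ S.X ∧ ∀ u, S.c u = S.c y → u ∉ S.R := by simp [Y0]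

theorem mem_Y2 {y : V} :
    y ∈ S.Y2 ↔ y ∈ S.swap.X ∧ ∃ r ∈ S.R, r ∉ S.P ∧ S.c r = S.c y := by simp [Y2]

/-! ### Adjacencies forced by the class order -/

theorem not_mem_X_of_eq {u v : V} (h : S.c u = S.c v) (hne : u ≠ v) : u ∉ S.X :=
  fun hu => hne (mem_X.1 hu v h.symm).symm

theorem exists_ne_of_not_mem_X {v : V} (h : v ∉ S.X) : ∃ u, S.c u = S.c v ∧ u ≠ v := by
  simpa [mem_X] using h

theorem X_adj {x v : V} (hx : x ∈ S.X) (hne : v ≠ x) : S.c v < S.c x ∨ S.G v x := by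
  rcases lt_trichotomy (S.c v) (S.c x) with h | h | h
  · exact Or.inl h
  · exact absurd (mem_X.1 hx v h) hne
  · exact Or.inr (S.K v x h fun s hs hsx => absurd (mem_X.1 hx s hs) hsx)

theorem XX {x x' : V} (hx : x ∈ S.X) (hx' : x' ∈ S.X) (hne : x ≠ x') : S.G x x' := by
  rcases X_adj hx' hne with h | h
  · rcases X_adj hx hne.symm with h' | h'
    · omega
    · exact S.G_symm h'
  · exact h

theorem Y_adj {y v : V} (hy : y ∈ S.swap.X) (hne : v ≠ y) : S.d v < S.d y ∨ S.H v y :=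
  X_adj (S := S.swap) hy hne

theorem YY {y y' : V} (hy : y ∈ S.swap.X) (hy' : y' ∈ S.swap.X) (hne : y ≠ y') : S.H y y' :=
  XX (S := S.swap) hy hy' hne

/-- Every other vertex in the `c`-class of a vertex of `P` is a singleton of `d`. -/
theorem P_class {r s : V} (hr : r ∈ S.P) (hs : S.c s = S.c r) (hne : s ≠ r) :
    s ∈ S.swap.X := by
  by_contra h
  exact hne ((mem_P.1 hr).2 s (mem_R.2 ⟨not_mem_X_of_eq hs hne, h⟩) hs)

theorem exists_P_mate {r : V} (hr : r ∈ S.P) :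
    ∃ y, S.c y = S.c r ∧ y ≠ r ∧ y ∈ S.swap.X ∧ y ∉ S.X := by
  obtain ⟨y, hy, hne⟩ := exists_ne_of_not_mem_X (mem_R.1 (mem_P.1 hr).1).1
  exact ⟨y, hy, hne, P_class hr hy hne, not_mem_X_of_eq hy hne⟩

theorem P_adj {r y : V} (hr : r ∈ S.P) (hy : y ∈ S.swap.X) (h : S.c r < S.c y) : S.G y r := by
  refine S.K y r h fun s hs hne => YY hy (P_class hr hs hne) ?_
  rintro rfl
  omega

theorem Y0_class {y s : V} (hy : y ∈ S.Y0) (hs : S.c s = S.c y) : s ∈ S.Y0 := by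
  obtain ⟨h1, h2, h3⟩ := mem_Y0.1 hy
  by_cases hne : s = y
  · exact hne ▸ hy
  have hX := not_mem_X_of_eq hs hne
  refine mem_Y0.2 ⟨?_, hX, fun u hu => h3 u (hu.trans hs)⟩
  by_contra h
  exact h3 s hs (mem_R.2 ⟨hX, h⟩)

/-- No singleton of `d` lies in a class of `c` after one contained in `Y`, since `Y` is an
`H`-clique. -/
theorem Y0_le {y₀ y : V} (h₀ : y₀ ∈ S.Y0) (hy : y ∈ S.swap.X) : S.c y ≤ S.c y₀ := by
  by_contra! h
  have hH : ∀ s, S.c s = S.c y₀ → S.H y s := fun s hs =>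
    YY hy (mem_Y0.1 (Y0_class h₀ hs)).1 (by rintro rfl; omega)
  exact S.disj (S.K y y₀ h fun s hs _ => hH s hs) (hH y₀ rfl)

theorem Y0_P_adj {y₀ r : V} (h₀ : y₀ ∈ S.Y0) (hr : r ∈ S.P) : S.G y₀ r := by
  obtain ⟨y, hy, -, hyY, -⟩ := exists_P_mate hr
  have h1 := Y0_le h₀ hyY
  have h2 : S.c r ≠ S.c y₀ := fun h => (mem_Y0.1 h₀).2.2 r h (mem_P.1 hr).1
  exact P_adj hr (mem_Y0.1 h₀).1 (by omega)

/-- The class of `c` of a vertex of `P2` is `{r, y}` with `y ∈ Y \ X`. -/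
theorem P2_mate {r : V} (hr : r ∈ S.P2) :
    ∃ y, y ≠ r ∧ S.c y = S.c r ∧ y ∈ S.swap.X ∧ y ∉ S.X ∧
      ∀ u, S.c u = S.c r → u = r ∨ u = y := by
  obtain ⟨hP, y, hy, hall⟩ := mem_P2.1 hr
  obtain ⟨u, hu, hne, huY, huX⟩ := exists_P_mate hP
  obtain rfl : u = y := (hall u hu).resolve_left hne
  exact ⟨u, hne, hu, huY, huX, hall⟩

/-- If some class of `c` is a nonsingleton subset of `Y`, then no vertex of `P` lies in a
two-element class `{r, x}` of `d` with `x ∈ X`. -/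
theorem not_P_Q2 {y₀ r : V} (h₀ : y₀ ∈ S.Y0) (hr : r ∈ S.P) (hr' : r ∈ S.swap.P2) : False := by
  obtain ⟨x, hxr, hdx, hxX, -, hall⟩ := P2_mate hr'
  change x ∈ S.X at hxX
  have hne : ∀ y ∈ S.Y0, y ≠ x := by
    rintro y hy rfl
    exact (mem_Y0.1 hy).2.1 hxX
  have hH : ∀ y ∈ S.Y0, S.H x y := by
    intro y hy
    rcases Y_adj (mem_Y0.1 hy).1 (hne y hy).symm with h | h
    · refine S.H_symm (S.K' y x h fun s hs hsx => ?_)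
      obtain rfl := (hall s (hs.trans hdx)).resolve_right hsx
      exact Y0_P_adj hy hr
    · exact h
  rcases X_adj hxX (hne y₀ h₀) with h | h
  · exact S.disj (S.K x y₀ h fun s hs _ => hH s (Y0_class h₀ hs)) (hH y₀ h₀)
  · exact S.disj (S.G_symm h) (hH y₀ h₀)

/-- The `d`-class of a vertex of `P` leaves `P` when some class of `c` is a nonsingleton subset
of `Y`. -/
theorem exists_not_P {y₀ r : V} (h₀ : y₀ ∈ S.Y0) (hr : r ∈ S.P) :
    ∃ s, S.d s = S.d r ∧ s ∉ S.P ∧ s ∉ S.swap.X := by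
  have hG := Y0_P_adj h₀ hr
  have hne : r ≠ y₀ := by
    rintro rfl
    exact (mem_Y0.1 h₀).2.2 r rfl (mem_P.1 hr).1
  have hlt : S.d r < S.d y₀ := (Y_adj (mem_Y0.1 h₀).1 hne).resolve_right
    fun h => S.disj hG (S.H_symm h)
  by_contra! hall
  refine S.disj hG (S.K' y₀ r hlt fun s hs hsr => ?_)
  by_contra hsG
  refine not_mem_X_of_eq (S := S.swap) hs hsr (hall s hs fun hsP => hsG (Y0_P_adj h₀ hsP))

/-! ### A common singleton of both colorings -/

theorem Y0_eq_empty {z : V} (hz : z ∈ S.X) (hz' : z ∈ S.swap.X) : S.Y0 = ∅ := by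
  refine Finset.eq_empty_of_forall_notMem fun y hy => ?_
  obtain ⟨h1, h2, -⟩ := mem_Y0.1 hy
  have hne : y ≠ z := by
    rintro rfl
    exact h2 hz
  rcases X_adj hz hne with h | h
  · have := Y0_le hy hz'
    omega
  · exact S.disj h (YY h1 hz' hne)

theorem z_adj_P {z r : V} (hz : z ∈ S.X) (hz' : z ∈ S.swap.X) (hr : r ∈ S.P) : S.G z r := by
  obtain ⟨y, hy, -, hyY, hyX⟩ := exists_P_mate hr
  have hne : y ≠ z := by
    rintro rfl
    exact hyX hz
  rcases X_adj hz hne with h | h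
  · exact P_adj hr hz' (by omega)
  · exact (S.disj h (YY hyY hz' hne)).elim

theorem exists_not_P_of_mem_inter {z r : V} (hz : z ∈ S.X) (hz' : z ∈ S.swap.X) (hr : r ∈ S.P) :
    ∃ s, S.d s = S.d r ∧ s ∉ S.P ∧ s ∉ S.swap.X ∧ s ∉ S.X := by
  have hG := z_adj_P hz hz' hr
  have hne : r ≠ z := by
    rintro rfl
    exact (mem_R.1 (mem_P.1 hr).1).1 hz
  have hlt : S.d r < S.d z := (Y_adj hz' hne).resolve_right fun h => S.disj hG (S.H_symm h)
  by_contra! hall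
  refine S.disj hG (S.K' z r hlt fun s hs hsr => ?_)
  by_contra hsG
  refine hsG (XX hz (hall s hs (fun hsP => hsG (z_adj_P hz hz' hsP))
    (not_mem_X_of_eq (S := S.swap) hs hsr)) ?_)
  rintro rfl
  omega

/-! ### Vertices in two-element classes of both colorings -/

theorem P2_Q2_aux {r₁ r₂ : V} (h₁ : r₁ ∈ S.P2) (h₁' : r₁ ∈ S.swap.P2) (h₂ : r₂ ∈ S.P2)
    (h₂' : r₂ ∈ S.swap.P2) (hlt : S.c r₁ < S.c r₂) : False := by
  obtain ⟨y₁, hy₁r, hy₁, hy₁Y, hy₁X, hA₁⟩ := P2_mate h₁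
  obtain ⟨y₂, hy₂r, hy₂, hy₂Y, hy₂X, hA₂⟩ := P2_mate h₂
  obtain ⟨x₁, hx₁r, hx₁, hx₁X, hx₁Y, hB₁⟩ := P2_mate h₁'
  obtain ⟨x₂, hx₂r, hx₂, hx₂X, hx₂Y, hB₂⟩ := P2_mate h₂'
  change S.d x₁ = S.d r₁ at hx₁
  change S.d x₂ = S.d r₂ at hx₂
  change x₁ ∈ S.X at hx₁X
  change x₂ ∈ S.X at hx₂X
  have hne : ∀ x y, x ∈ S.X → y ∉ S.X → x ≠ y := by
    rintro x y hx hy rfl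
    exact hy hx
  have hy₂r₁ : S.G y₂ r₁ := P_adj (mem_P2.1 h₁).1 hy₂Y (by omega)
  have hdne : S.d r₁ ≠ S.d r₂ := by
    intro h
    have := (mem_P.1 (mem_P2.1 h₂').1).2 r₁ (mem_P.1 (mem_P2.1 h₁').1).1 h
    rw [this] at hlt
    omega
  -- `r₁` cannot supply the `H`-adjacency of `y₂` to `{r₁, x₁}`, so `x₁` must
  have hH12 : S.H x₁ y₂ := by
    rcases Y_adj hy₂Y (hne x₁ y₂ hx₁X hy₂X) with h | h
    · refine S.H_symm (S.K' y₂ x₁ h fun s hs hsx => ?_)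
      rwa [(hB₁ s (hs.trans hx₁)).resolve_right hsx]
    · exact h
  rcases lt_or_gt_of_ne hdne with hd | hd
  · have hx₂r₁ : S.H x₂ r₁ :=
      P_adj (S := S.swap) (mem_P2.1 h₁').1 hx₂X (by change S.d r₁ < S.d x₂; omega)
    have hG21 : S.G y₁ x₂ := by
      rcases X_adj hx₂X (hne x₂ y₁ hx₂X hy₁X).symm with h | h
      · refine S.G_symm (S.K x₂ y₁ h fun s hs hsy => ?_)
        rwa [(hA₁ s (hs.trans hy₁)).resolve_right hsy]
      · exact h
    have hx₁r₂ : S.G x₁ r₂ := by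
      have hc : S.c y₂ < S.c x₁ := (X_adj hx₁X (hne x₁ y₂ hx₁X hy₂X).symm).resolve_right
        fun h => S.disj (S.G_symm h) hH12
      refine S.K x₁ r₂ (by omega) fun s hs hsr => ?_
      rwa [(hA₂ s hs).resolve_left hsr]
    have hy₁r₂ : S.H y₁ r₂ := by
      have hc : S.d x₂ < S.d y₁ := (Y_adj hy₁Y (hne x₂ y₁ hx₂X hy₁X)).resolve_right
        fun h => S.disj (S.G_symm hG21) h
      refine S.K' y₁ r₂ (by omega) fun s hs hsr => ?_
      rwa [(hB₂ s hs).resolve_left hsr]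
    have hG : S.G r₂ r₁ := by
      refine S.K r₂ r₁ hlt fun s hs hsr => ?_
      rw [(hA₁ s hs).resolve_left hsr]
      exact S.H_symm hy₁r₂
    have hH : S.H r₂ r₁ := by
      refine S.K' r₂ r₁ hd fun s hs hsr => ?_
      rw [(hB₁ s hs).resolve_left hsr]
      exact S.G_symm hx₁r₂
    exact S.disj hG hH
  · have hx₁r₂ : S.H x₁ r₂ :=
      P_adj (S := S.swap) (mem_P2.1 h₂').1 hx₁X (by change S.d r₂ < S.d x₁; omega)
    have hG : S.G y₂ x₁ := by
      rcases X_adj hx₁X (hne x₁ y₂ hx₁X hy₂X).symm with h | h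
      · refine S.G_symm (S.K x₁ y₂ h fun s hs hsy => ?_)
        rwa [(hA₂ s (hs.trans hy₂)).resolve_right hsy]
      · exact h
    exact S.disj (S.G_symm hG) hH12

open scoped Classical in
theorem card_P2_inter_le : (S.P2 ∩ S.swap.P2).card ≤ 1 := by
  rw [Finset.card_le_one]
  intro r₁ h₁ r₂ h₂
  rw [Finset.mem_inter] at h₁ h₂
  rcases lt_trichotomy (S.c r₁) (S.c r₂) with h | h | h
  · exact (P2_Q2_aux h₁.1 h₁.2 h₂.1 h₂.2 h).elim
  · exact (mem_P.1 (mem_P2.1 h₂.1).1).2 r₁ (mem_P.1 (mem_P2.1 h₁.1).1).1 h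
  · exact (P2_Q2_aux h₂.1 h₂.2 h₁.1 h₁.2 h).elim

/-! ### Counting classes and vertices -/

open scoped Classical in
theorem card_image_Y0_le : (S.Y0.image S.c).card ≤ 1 := by
  rw [Finset.card_le_one]
  intro a ha b hb
  obtain ⟨y, hy, rfl⟩ := Finset.mem_image.1 ha
  obtain ⟨y', hy', rfl⟩ := Finset.mem_image.1 hb
  exact le_antisymm (Y0_le hy' (mem_Y0.1 hy).1) (Y0_le hy (mem_Y0.1 hy').1)

open scoped Classical in
theorem card_X_inter_le : (S.X ∩ S.swap.X).card ≤ 1 := by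
  rw [Finset.card_le_one]
  intro a ha b hb
  rw [Finset.mem_inter] at ha hb
  by_contra hne
  exact S.disj (XX ha.1 hb.1 hne) (YY ha.2 hb.2 hne)

open scoped Classical in
/-- The number of colors of `c`, the number of vertices of `R`, and the number of singletons of
`d`, split according to the type of the class of `c`. -/
theorem counts (S : Config V) :
    (Finset.univ.image S.c).card ≤
      S.X.card + S.P.card + ((S.R \ S.P).image S.c).card + (S.Y0.image S.c).card ∧
    2 * ((S.R \ S.P).image S.c).card + S.P.card ≤ S.R.card ∧
    (S.X ∩ S.swap.X).card + 2 * (S.Y0.image S.c).card + (S.P.card + (S.P \ S.P2).card) +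
      S.Y2.card ≤ S.swap.X.card := by
  refine ⟨?_, ?_, ?_⟩
  · have hsub : Finset.univ.image S.c ⊆
        ((S.X.image S.c ∪ S.P.image S.c) ∪ (S.R \ S.P).image S.c) ∪ S.Y0.image S.c := by
      intro n hn
      obtain ⟨v, -, rfl⟩ := Finset.mem_image.1 hn
      have hR : ∀ u ∈ S.R, S.c u = S.c v → S.c v ∈
          ((S.X.image S.c ∪ S.P.image S.c) ∪ (S.R \ S.P).image S.c) ∪ S.Y0.image S.c := by
        intro u hu huv
        rw [← huv]
        by_cases huP : u ∈ S.P
        · have := Finset.mem_image_of_mem S.c huP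
          simp only [Finset.mem_union]; tauto
        · have := Finset.mem_image_of_mem S.c (Finset.mem_sdiff.2 ⟨hu, huP⟩)
          simp only [Finset.mem_union]; tauto
      by_cases hvX : v ∈ S.X
      · have := Finset.mem_image_of_mem S.c hvX
        simp only [Finset.mem_union]; tauto
      by_cases hvY : v ∈ S.swap.X
      · by_cases hex : ∃ u ∈ S.R, S.c u = S.c v
        · obtain ⟨u, hu, huv⟩ := hex
          exact hR u hu huv
        · have h0 : v ∈ S.Y0 := mem_Y0.2 ⟨hvY, hvX, fun u hu huR => hex ⟨u, huR, hu⟩⟩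
          have := Finset.mem_image_of_mem S.c h0
          simp only [Finset.mem_union]; tauto
      · exact hR v (mem_R.2 ⟨hvX, hvY⟩) rfl
    have h1 := Finset.card_le_card hsub
    have h2 := Finset.card_union_le ((S.X.image S.c ∪ S.P.image S.c) ∪ (S.R \ S.P).image S.c)
      (S.Y0.image S.c)
    have h3 := Finset.card_union_le (S.X.image S.c ∪ S.P.image S.c) ((S.R \ S.P).image S.c)
    have h4 := Finset.card_union_le (S.X.image S.c) (S.P.image S.c)
    have h5 := Finset.card_image_le (s := S.X) (f := S.c)
    have h6 := Finset.card_image_le (s := S.P) (f := S.c)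
    omega
  · have h1 := two_mul_card_image_le S.c (S.R \ S.P) (by
      intro r hr
      obtain ⟨hrR, hrP⟩ := Finset.mem_sdiff.1 hr
      have : ∃ u ∈ S.R, S.c u = S.c r ∧ u ≠ r := by
        by_contra! h
        exact hrP (mem_P.2 ⟨hrR, h⟩)
      obtain ⟨u, hu, huc, hne⟩ := this
      refine ⟨u, Finset.mem_sdiff.2 ⟨hu, fun huP => ?_⟩, huc, hne⟩
      exact hne ((mem_P.1 huP).2 r hrR huc.symm).symm)
    have h2 := Finset.card_sdiff_add_card_eq_card (s := S.P) (t := S.R) (Finset.filter_subset _ _)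
    omega
  · have h0 := two_mul_card_image_le S.c S.Y0 (by
      intro y hy
      obtain ⟨u, hu, hne⟩ := exists_ne_of_not_mem_X (mem_Y0.1 hy).2.1
      exact ⟨u, Y0_class hy hu, hu, hne⟩)
    set F : V → Finset V := fun r => S.swap.X.filter fun y => S.c y = S.c r with hF
    set Y1 := S.P.biUnion F with hY1
    have hmemY1 : ∀ y, y ∈ Y1 ↔ y ∈ S.swap.X ∧ ∃ r ∈ S.P, S.c y = S.c r := by
      intro y
      simp only [hY1, hF, Finset.mem_biUnion, Finset.mem_filter]
      tauto
    have h1 : S.P.card + (S.P \ S.P2).card ≤ Y1.card := by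
      have hdisj : ∀ r ∈ S.P, ∀ s ∈ S.P, r ≠ s → Disjoint (F r) (F s) := by
        intro r hr s hs hne
        rw [Finset.disjoint_left]
        intro y hy hy'
        simp only [hF, Finset.mem_filter] at hy hy'
        exact hne ((mem_P.1 hs).2 r (mem_P.1 hr).1 (hy.2.symm.trans hy'.2))
      rw [hY1, Finset.card_biUnion hdisj]
      have h2 : S.P.card + (S.P \ S.P2).card = ∑ r ∈ S.P, (1 + if r ∉ S.P2 then 1 else 0) := by
        rw [Finset.sum_add_distrib, Finset.sum_const, smul_eq_mul, mul_one,
          ← Finset.card_filter, Finset.sdiff_eq_filter]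
      rw [h2]
      refine Finset.sum_le_sum fun r hr => ?_
      obtain ⟨y, hy, hyr, hyY, -⟩ := exists_P_mate hr
      have hyF : y ∈ F r := Finset.mem_filter.2 ⟨hyY, hy⟩
      by_cases hr2 : r ∈ S.P2
      · simpa [hr2] using Finset.card_pos.2 ⟨y, hyF⟩
      · rw [if_pos hr2]
        have : ∃ u, S.c u = S.c r ∧ u ≠ r ∧ u ≠ y := by
          by_contra! h
          exact hr2 (mem_P2.2 ⟨hr, y, hyr, fun u hu => or_iff_not_imp_left.2 (h u hu)⟩)
        obtain ⟨u, hu, hur, huy⟩ := this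
        exact Finset.one_lt_card.2
          ⟨u, Finset.mem_filter.2 ⟨P_class hr hu hur, hu⟩, y, hyF, huy⟩
    have hd1 : Disjoint (S.X ∩ S.swap.X) S.Y0 := by
      rw [Finset.disjoint_left]
      intro y hy hy'
      exact (mem_Y0.1 hy').2.1 (Finset.mem_inter.1 hy).1
    have hd2 : Disjoint (S.X ∩ S.swap.X ∪ S.Y0) Y1 := by
      rw [Finset.disjoint_left]
      intro y hy hy'
      obtain ⟨-, r, hr, hyr⟩ := (hmemY1 y).1 hy'
      rcases Finset.mem_union.1 hy with h | h
      · have := mem_X.1 (Finset.mem_inter.1 h).1 r hyr.symm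
        subst this
        exact (mem_R.1 (mem_P.1 hr).1).1 (Finset.mem_inter.1 h).1
      · exact (mem_Y0.1 h).2.2 r hyr.symm (mem_P.1 hr).1
    have hd3 : Disjoint (S.X ∩ S.swap.X ∪ S.Y0 ∪ Y1) S.Y2 := by
      rw [Finset.disjoint_left]
      intro y hy hy'
      obtain ⟨-, r, hrR, hrP, hyr⟩ := mem_Y2.1 hy'
      rcases Finset.mem_union.1 hy with h | h
      · rcases Finset.mem_union.1 h with h | h
        · have := mem_X.1 (Finset.mem_inter.1 h).1 r hyr
          subst this
          exact (mem_R.1 hrR).1 (Finset.mem_inter.1 h).1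
        · exact (mem_Y0.1 h).2.2 r hyr hrR
      · obtain ⟨-, s, hs, hys⟩ := (hmemY1 y).1 h
        have := (mem_P.1 hs).2 r hrR (hyr.trans hys)
        subst this
        exact hrP hs
    have hsub : S.X ∩ S.swap.X ∪ S.Y0 ∪ Y1 ∪ S.Y2 ⊆ S.swap.X := by
      intro y hy
      simp only [Finset.mem_union, Finset.mem_inter, hmemY1, mem_Y0, mem_Y2] at hy
      tauto
    have h3 := Finset.card_le_card hsub
    rw [Finset.card_union_of_disjoint hd3, Finset.card_union_of_disjoint hd2,
      Finset.card_union_of_disjoint hd1] at h3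
    omega

/-- A vertex sharing its `d`-class with another vertex of `R` is not in `Q = S.swap.P`. -/
theorem not_mem_Q {S : Config V} {r s : V} (hr : r ∈ S.R) (hd : S.d s = S.d r) (hne : r ≠ s) :
    s ∉ S.swap.P :=
  fun hs => hne ((mem_P.1 hs).2 r ((swap_R (S := S)).symm ▸ hr) hd.symm)

open scoped Classical in
theorem card_other_le {y₀ : V} (h₀ : y₀ ∈ S.Y0) :
    ((S.swap.R \ S.swap.P).image S.d).card ≤
      (S.R \ (S.P ∪ S.swap.P)).card + S.swap.Y2.card := by
  have hsub : (S.swap.R \ S.swap.P).image S.d ⊆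
      (S.R \ (S.P ∪ S.swap.P)).image S.d ∪ S.swap.Y2.image S.d := by
    intro n hn
    obtain ⟨r, hr, rfl⟩ := Finset.mem_image.1 hn
    obtain ⟨hrR', hrQ⟩ := Finset.mem_sdiff.1 hr
    have hrR : r ∈ S.R := swap_R (S := S) ▸ hrR'
    rw [Finset.mem_union]
    by_cases hrP : r ∈ S.P
    · obtain ⟨s, hs, hsP, hsY⟩ := exists_not_P h₀ hrP
      by_cases hsX : s ∈ S.X
      · right
        exact Finset.mem_image.2 ⟨s, mem_Y2.2 ⟨hsX, r, hrR', hrQ, hs.symm⟩, hs⟩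
      · left
        have hne : r ≠ s := by
          rintro rfl
          exact hsP hrP
        have := not_mem_Q hrR hs hne
        exact Finset.mem_image.2 ⟨s, by simp [mem_R, hsX, hsY, hsP, this], hs⟩
    · left
      exact Finset.mem_image_of_mem _ (by simp [hrR, hrP, hrQ])
  have h1 := Finset.card_le_card hsub
  have h2 := Finset.card_union_le ((S.R \ (S.P ∪ S.swap.P)).image S.d) (S.swap.Y2.image S.d)
  have h3 := Finset.card_image_le (s := S.R \ (S.P ∪ S.swap.P)) (f := S.d)
  have h4 := Finset.card_image_le (s := S.swap.Y2) (f := S.d)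
  omega

open scoped Classical in
theorem card_other_le_of_mem_inter {z : V} (hz : z ∈ S.X) (hz' : z ∈ S.swap.X) :
    ((S.swap.R \ S.swap.P).image S.d).card ≤ (S.R \ (S.P ∪ S.swap.P)).card := by
  have hsub : (S.swap.R \ S.swap.P).image S.d ⊆ (S.R \ (S.P ∪ S.swap.P)).image S.d := by
    intro n hn
    obtain ⟨r, hr, rfl⟩ := Finset.mem_image.1 hn
    obtain ⟨hrR', hrQ⟩ := Finset.mem_sdiff.1 hr
    have hrR : r ∈ S.R := swap_R (S := S) ▸ hrR'
    by_cases hrP : r ∈ S.P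
    · obtain ⟨s, hs, hsP, hsY, hsX⟩ := exists_not_P_of_mem_inter hz hz' hrP
      have hne : r ≠ s := by
        rintro rfl
        exact hsP hrP
      have := not_mem_Q hrR hs hne
      exact Finset.mem_image.2 ⟨s, by simp [mem_R, hsX, hsY, hsP, this], hs⟩
    · exact Finset.mem_image_of_mem _ (by simp [hrR, hrP, hrQ])
  exact (Finset.card_le_card hsub).trans Finset.card_image_le

open scoped Classical in
theorem main (S : Config V) (hn : 10 ≤ Fintype.card V) :
    (Finset.univ.image S.c).card + (Finset.univ.image S.d).card ≤
      (5 * Fintype.card V + 2) / 4 := by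
  obtain ⟨a1, a2, a3⟩ := counts S
  obtain ⟨b1, b2, b3⟩ := counts S.swap
  change _ ≤ S.X.card at b3
  change (Finset.univ.image S.d).card ≤ _ + _ + ((S.swap.R \ S.swap.P).image S.d).card +
    (S.swap.Y0.image S.d).card at b1
  change 2 * ((S.swap.R \ S.swap.P).image S.d).card + _ ≤ _ at b2
  change (S.swap.X ∩ S.X).card + 2 * (S.swap.Y0.image S.d).card + _ + _ ≤ _ at b3
  rw [Finset.inter_comm] at b3
  have hSR : S.swap.R.card = S.R.card := by rw [swap_R (S := S)]
  have hε := card_image_Y0_le (S := S)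
  have hε' : (S.swap.Y0.image S.d).card ≤ 1 := card_image_Y0_le (S := S.swap)
  have hz := card_X_inter_le (S := S)
  have hδ := card_P2_inter_le (S := S)
  have hV : S.X.card + S.swap.X.card + S.R.card =
      Fintype.card V + (S.X ∩ S.swap.X).card := by
    have h1 := Finset.card_union_add_card_inter S.X S.swap.X
    have h2 : S.R = (S.X ∪ S.swap.X)ᶜ := by
      ext v
      simp [mem_R]
    have h3 := Finset.card_add_card_compl (S.X ∪ S.swap.X)
    rw [h2]
    omega
  have hm : S.P.card + S.swap.P.card + (S.R \ (S.P ∪ S.swap.P)).card =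
      S.R.card + (S.P ∩ S.swap.P).card := by
    have h1 := Finset.card_union_add_card_inter S.P S.swap.P
    have h2 := Finset.card_sdiff_add_card_eq_card (s := S.P ∪ S.swap.P) (t := S.R) (by
      refine Finset.union_subset (Finset.filter_subset _ _) ?_
      rw [← swap_R (S := S)]
      exact Finset.filter_subset _ _)
    omega
  have hw : (S.P ∩ S.swap.P).card ≤
      (S.P \ S.P2).card + (S.swap.P \ S.swap.P2).card + (S.P2 ∩ S.swap.P2).card := by
    have hsub : S.P ∩ S.swap.P ⊆
        ((S.P \ S.P2) ∪ (S.swap.P \ S.swap.P2)) ∪ (S.P2 ∩ S.swap.P2) := by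
      intro v hv
      simp only [Finset.mem_union, Finset.mem_inter, Finset.mem_sdiff] at hv ⊢
      tauto
    have h1 := Finset.card_le_card hsub
    have h2 := Finset.card_union_le ((S.P \ S.P2) ∪ (S.swap.P \ S.swap.P2)) (S.P2 ∩ S.swap.P2)
    have h3 := Finset.card_union_le (S.P \ S.P2) (S.swap.P \ S.swap.P2)
    omega
  rcases Finset.eq_empty_or_nonempty (S.X ∩ S.swap.X) with hz0 | ⟨z, hzm⟩
  · rw [hz0, Finset.card_empty] at a3 b3 hV
    rcases Finset.eq_empty_or_nonempty S.Y0 with hY | ⟨y₀, hy₀⟩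
    · rw [hY, Finset.image_empty, Finset.card_empty] at a1 a3
      rcases Finset.eq_empty_or_nonempty S.swap.Y0 with hY' | ⟨x₀, hx₀⟩
      · rw [hY', Finset.image_empty, Finset.card_empty] at b1 b3
        omega
      · have hδ0 : S.P2 ∩ S.swap.P2 = ∅ := by
          refine Finset.eq_empty_of_forall_notMem fun r hr => ?_
          obtain ⟨h1, h2⟩ := Finset.mem_inter.1 hr
          exact not_P_Q2 (S := S.swap) hx₀ (mem_P2.1 h2).1 h1
        rw [hδ0, Finset.card_empty] at hw
        omega
    · rcases Finset.eq_empty_or_nonempty S.swap.Y0 with hY' | ⟨x₀, hx₀⟩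
      · rw [hY', Finset.image_empty, Finset.card_empty] at b1 b3
        have hδ0 : S.P2 ∩ S.swap.P2 = ∅ := by
          refine Finset.eq_empty_of_forall_notMem fun r hr => ?_
          obtain ⟨h1, h2⟩ := Finset.mem_inter.1 hr
          exact not_P_Q2 hy₀ (mem_P2.1 h1).1 h2
        rw [hδ0, Finset.card_empty] at hw
        omega
      · have hw1 : (S.P ∩ S.swap.P).card ≤ (S.P \ S.P2).card := by
          refine Finset.card_le_card fun r hr => ?_
          obtain ⟨h1, h2⟩ := Finset.mem_inter.1 hr
          exact Finset.mem_sdiff.2 ⟨h1, fun h => not_P_Q2 (S := S.swap) hx₀ h2 h⟩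
        have hw2 : (S.P ∩ S.swap.P).card ≤ (S.swap.P \ S.swap.P2).card := by
          refine Finset.card_le_card fun r hr => ?_
          obtain ⟨h1, h2⟩ := Finset.mem_inter.1 hr
          exact Finset.mem_sdiff.2 ⟨h2, fun h => not_P_Q2 hy₀ h1 h⟩
        have ho := card_other_le hy₀
        have ho' : ((S.R \ S.P).image S.c).card ≤
            (S.R \ (S.P ∪ S.swap.P)).card + S.Y2.card := by
          have := card_other_le (S := S.swap) hx₀
          rw [swap_R (S := S), Finset.union_comm] at this
          exact this
        omega
  · obtain ⟨h1, h2⟩ := Finset.mem_inter.1 hzm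
    have hz1 : (S.X ∩ S.swap.X).card = 1 :=
      le_antisymm hz (Finset.card_pos.2 ⟨z, hzm⟩)
    rw [Y0_eq_empty h1 h2, Finset.image_empty, Finset.card_empty] at a1 a3
    rw [Y0_eq_empty (S := S.swap) h2 h1, Finset.image_empty, Finset.card_empty] at b1 b3
    have hw0 : S.P ∩ S.swap.P = ∅ := by
      refine Finset.eq_empty_of_forall_notMem fun r hr => ?_
      obtain ⟨hr1, hr2⟩ := Finset.mem_inter.1 hr
      exact S.disj (z_adj_P h1 h2 hr1) (z_adj_P (S := S.swap) h2 h1 hr2)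
    rw [hw0, Finset.card_empty] at hm
    have ho := card_other_le_of_mem_inter h1 h2
    have ho' : ((S.R \ S.P).image S.c).card ≤ (S.R \ (S.P ∪ S.swap.P)).card := by
      have := card_other_le_of_mem_inter (S := S.swap) h2 h1
      rw [swap_R (S := S), Finset.union_comm] at this
      exact this
    omega

end Config

/-- If `D` is a digraph of order `n ≥ 10`, then
`dG(D) + dG(Dᶜ) ≤ ⌊(5n + 2)/4⌋`.  (Natural-number division is the floor.) -/
theorem digrundy_nordhaus_gaddum_ge_ten {V : Type*} [Fintype V]
    (D : Digraph V) (hD : ∀ v : V, ¬ D.Adj v v)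
    (hn : 10 ≤ Fintype.card V) :
    digrundy D + digrundy (digraphCompl D) ≤ (5 * Fintype.card V + 2) / 4 := by
  obtain ⟨e, he⟩ := exists_greedyCount_eq D
  obtain ⟨e', he'⟩ := exists_greedyCount_eq (digraphCompl D)
  have hD' : ∀ v, ¬ (digraphCompl D).Adj v v := fun v h => h.1 rfl
  let S : Config V :=
    { G := fun u v => D.Adj u v ∧ D.Adj v u
      H := fun u v => (digraphCompl D).Adj u v ∧ (digraphCompl D).Adj v u
      c := greedyColoring D e
      d := greedyColoring (digraphCompl D) e'
      G_symm := fun h => h.symm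
      H_symm := fun h => h.symm
      disj := fun h h' => h'.1.2 h.1
      K := fun v t hlt h => greedy_key D hD e v t hlt fun s hs hst =>
        ⟨(h s hs hst).1.2, (h s hs hst).2.2⟩
      K' := fun v t hlt h => greedy_key (digraphCompl D) hD' e' v t hlt fun s hs hst =>
        ⟨fun h' => h'.2 (h s hs hst).1, fun h' => h'.2 (h s hs hst).2⟩ }
  have := S.main hn
  rw [← he, ← he']
  unfold greedyCount
  convert this

end Paper
end
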